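/- Suppose A ∈ A satisfies End_A(A) = k. Then E_A ⋆ F_A − F_A ⋆ E_A = (q − 1)·(K^†_{[A]} − K_{[A]}) in DH(R). -/

import Mathlib

open CategoryTheory CategoryTheory.Limits Opposite

noncomputable section

universe u

variable (k : Type) [Field k] [Fintype k]
variable (R : Type u) [SmallCategory R] [Abelian R] [Linear k R] [EnoughProjectives R]

/-- The objects `A` of `R` such that `Hom(M, A)` is a finite set for every `M`. -/
def IsFinHom (A : R) : Prop := ∀ M : R, Finite (M ⟶ A)

/-- The Euler form `⟨M,A⟩ = dim Hom(M,A) - dim Ext¹(M,A)`. -/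
def euler (M A : R) : ℤ :=
  (Module.finrank k (M ⟶ A) : ℤ) -
    (Module.finrank k (((_root_.Ext k R 1).obj (op M)).obj A) : ℤ)

/-- The set of relations defining the Grothendieck group of `R`. -/
def sesSet : Set (FreeAbelianGroup R) :=
  {x | ∃ S : ShortComplex R, S.ShortExact ∧
    x = FreeAbelianGroup.of S.X₂ - FreeAbelianGroup.of S.X₁ - FreeAbelianGroup.of S.X₃}

/-- The Grothendieck group `K(R)`. -/
abbrev K0 := FreeAbelianGroup R ⧸ AddSubgroup.closure (sesSet R)

/-- The class of an object in `K(R)`. -/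
def K0.cls (X : R) : K0 R := QuotientAddGroup.mk (FreeAbelianGroup.of X)

/-- The set of relations defining the Grothendieck group of the subcategory `A`. -/
def sesSetA : Set (FreeAbelianGroup {A : R // IsFinHom R A}) :=
  {x | ∃ (S : ShortComplex R) (h1 : IsFinHom R S.X₁) (h2 : IsFinHom R S.X₂)
      (h3 : IsFinHom R S.X₃), S.ShortExact ∧
    x = FreeAbelianGroup.of ⟨S.X₂, h2⟩ - FreeAbelianGroup.of ⟨S.X₁, h1⟩ -
      FreeAbelianGroup.of ⟨S.X₃, h3⟩}

/-- The Grothendieck group `K(A)`. -/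
abbrev KA := FreeAbelianGroup {A : R // IsFinHom R A} ⧸ AddSubgroup.closure (sesSetA R)

/-- The class of an object of `A` in `K(A)`. -/
def KA.cls (A : {A : R // IsFinHom R A}) : KA R := QuotientAddGroup.mk (FreeAbelianGroup.of A)

/-- `R` is hereditary, i.e. of global dimension at most 1. -/
def Hereditary : Prop :=
  ∀ X Y : R, Subsingleton (((_root_.Ext k R 2).obj (op X)).obj Y)

/-- Condition (c): cancellation for projectives. -/
def CondC : Prop :=
  ∀ P Q M : R, Projective P → Projective Q → Projective M →
    Nonempty ((M ⊞ P) ≅ (M ⊞ Q)) → Nonempty (P ≅ Q)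

/-- Condition (d): every element of `K(R)` is a `ℚ`-linear combination of classes of
objects of `A`. -/
def CondD : Prop :=
  ∀ x : K0 R, ∃ n : ℕ, n ≠ 0 ∧ (n : ℤ) • x ∈
    AddSubgroup.closure (Set.range fun A : {A : R // IsFinHom R A} => K0.cls R A.1)

/-- Condition (e). -/
def CondE : Prop :=
  ∀ A B : R, IsFinHom R A → IsFinHom R B → K0.cls R A = K0.cls R B →
    ∀ P : R, Projective P → Nat.card (P ⟶ A) = Nat.card (P ⟶ B)

structure Z2Cx where
  X0 : R
  X1 : R
  d0 : X0 ⟶ X1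
  d1 : X1 ⟶ X0
  d01 : d0 ≫ d1 = 0
  d10 : d1 ≫ d0 = 0

namespace Z2Cx

variable {R}

/-- Morphisms of `ℤ/2`-graded complexes. -/
@[ext] structure Hom (M N : Z2Cx R) where
  f0 : M.X0 ⟶ N.X0
  f1 : M.X1 ⟶ N.X1
  comm0 : M.d0 ≫ f1 = f0 ≫ N.d0
  comm1 : M.d1 ≫ f0 = f1 ≫ N.d1

instance : CategoryStruct (Z2Cx R) where
  Hom := Hom
  id M := ⟨𝟙 _, 𝟙 _, by simp, by simp⟩
  comp {M N P} f g := ⟨f.f0 ≫ g.f0, f.f1 ≫ g.f1, by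
      rw [← Category.assoc, f.comm0, Category.assoc, g.comm0, Category.assoc], by
      rw [← Category.assoc, f.comm1, Category.assoc, g.comm1, Category.assoc]⟩

@[simp] lemma id_f0 (M : Z2Cx R) : (𝟙 M : Hom M M).f0 = 𝟙 M.X0 := rfl
@[simp] lemma id_f1 (M : Z2Cx R) : (𝟙 M : Hom M M).f1 = 𝟙 M.X1 := rfl
@[simp] lemma comp_f0 {M N P : Z2Cx R} (f : M ⟶ N) (g : N ⟶ P) :
    (f ≫ g).f0 = Hom.f0 f ≫ Hom.f0 g := rfl
@[simp] lemma comp_f1 {M N P : Z2Cx R} (f : M ⟶ N) (g : N ⟶ P) :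
    (f ≫ g).f1 = Hom.f1 f ≫ Hom.f1 g := rfl

instance : Category (Z2Cx R) where
  id_comp f := by apply Hom.ext <;> simp
  comp_id f := by apply Hom.ext <;> simp
  assoc f g h := by apply Hom.ext <;> simp

variable (R)

/-- The two-term complex `C_f` associated to a morphism `f`, concentrated so that
`X1 = P`, `X0 = Q`, `d1 = f`, `d0 = 0`. -/
def Cf {P Q : R} (f : P ⟶ Q) : Z2Cx R := ⟨Q, P, 0, f, by simp, by simp⟩

/-- The shift involution `†`: it interchanges the gradings and negates the differentials. -/
def dagger (M : Z2Cx R) : Z2Cx R :=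
  ⟨M.X1, M.X0, -M.d1, -M.d0, by simp [M.d10], by simp [M.d01]⟩

/-- The acyclic complex `K_P` with `d1 = 𝟙 P` and `d0 = 0`. -/
def KP (P : R) : Z2Cx R := ⟨P, P, 0, 𝟙 P, by simp, by simp⟩

/-- Direct sum of `ℤ/2`-graded complexes. -/
def dsum (M N : Z2Cx R) : Z2Cx R where
  X0 := M.X0 ⊞ N.X0
  X1 := M.X1 ⊞ N.X1
  d0 := biprod.map M.d0 N.d0
  d1 := biprod.map M.d1 N.d1
  d01 := by ext <;> simp [M.d01, N.d01]
  d10 := by ext <;> simp [M.d10, N.d10]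

/-- Degree `0` homology of a `ℤ/2`-graded complex. -/
def H0 (M : Z2Cx R) : R := (ShortComplex.mk M.d1 M.d0 M.d10).homology

/-- Degree `1` homology of a `ℤ/2`-graded complex. -/
def H1 (M : Z2Cx R) : R := (ShortComplex.mk M.d0 M.d1 M.d01).homology

/-- The homology complex `H•(M•)`, with zero differentials. -/
def Hcx (M : Z2Cx R) : Z2Cx R := ⟨H0 R M, H1 R M, 0, 0, by simp, by simp⟩

/-- A complex is acyclic if its homology vanishes. -/
def Acyclic (M : Z2Cx R) : Prop := IsZero (H0 R M) ∧ IsZero (H1 R M)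

end Z2Cx

namespace Z2Cx

variable {R}

/-- A short exact sequence of `ℤ/2`-graded complexes, exhibiting an extension of `M` by `N`
(short exactness of a sequence of complexes is componentwise short exactness). -/
structure ExtSES (M N : Z2Cx R) where
  E : Z2Cx R
  i : N ⟶ E
  p : E ⟶ M
  w0 : Hom.f0 i ≫ Hom.f0 p = 0
  w1 : Hom.f1 i ≫ Hom.f1 p = 0
  ex0 : (ShortComplex.mk (Hom.f0 i) (Hom.f0 p) w0).ShortExact
  ex1 : (ShortComplex.mk (Hom.f1 i) (Hom.f1 p) w1).ShortExact

/-- Equivalence of extensions of complexes. -/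
def ExtEquiv (M N : Z2Cx R) (s t : ExtSES M N) : Prop :=
  ∃ φ : s.E ≅ t.E, s.i ≫ φ.hom = t.i ∧ φ.hom ≫ t.p = s.p

/-- The set `Ext¹_{C(R)}(M•, N•)` of equivalence classes of extensions of `M•` by `N•`
in the category of `ℤ/2`-graded complexes over `R`. -/
def ExtCl (M N : Z2Cx R) := Quot (ExtEquiv M N)

end Z2Cx

/-- Complexes of projectives with homology in the subcategory `A`, i.e. objects
of `C_fin(P)`. -/
def FinCx (M : Z2Cx R) : Prop :=
  Projective M.X0 ∧ Projective M.X1 ∧ IsFinHom R (Z2Cx.H0 R M) ∧ IsFinHom R (Z2Cx.H1 R M)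

attribute [local instance] Classical.propDecidable

/-- The class `[M•] = [M₀] - [M₁]` in `K(R)` of a `ℤ/2`-graded complex. -/
def clsOf (M : Z2Cx R) : K0 R := K0.cls R M.X0 - K0.cls R M.X1

/-- Isomorphism of `ℤ/2`-graded complexes, as a relation. -/
def cxRel (M N : Z2Cx R) : Prop := Nonempty (M ≅ N)

/-- Isomorphism classes of `ℤ/2`-graded complexes. -/
def CxCls := Quot (cxRel R)

/-- The isomorphism class of a complex. -/
def ccls (M : Z2Cx R) : CxCls R := Quot.mk _ M

/-- The isomorphism class of the middle term of an extension class. -/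
def extMid {M N : Z2Cx R} : Z2Cx.ExtCl M N → CxCls R :=
  Quot.lift (fun s => ccls R s.E) (fun s t h => by
    obtain ⟨φ, -, -⟩ := h
    exact Quot.sound ⟨φ⟩)

/-- `|Ext¹_{C(R)}(M•,N•)_{P•}|` : the number of extension classes of `M•` by `N•` whose
middle term has isomorphism class `c`. -/
def extCount (M N : Z2Cx R) (c : CxCls R) : ℕ :=
  Nat.card {x : Z2Cx.ExtCl M N // extMid R x = c}

/-- The `ℚ`-valued extension of the Euler form to `K(R) × K(R)`
(which exists by condition (d)). -/
structure EulerData where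
  eQ : K0 R →+ K0 R →+ ℚ
  compat : ∀ (M A : R), IsFinHom R A →
    eQ (K0.cls R M) (K0.cls R A) = euler k R M A

/-- A choice, for every complex of projectives `M•`, of the classes `[M₁⁺]` and `[M₀⁻]`
of the components of the canonical decomposition `M• = M•⁺ ⊕ M•⁻ = C_f ⊕ C_g^†`. -/
structure DecData where
  cplus : Z2Cx R → K0 R
  cminus : Z2Cx R → K0 R
  spec : ∀ M : Z2Cx R, Projective M.X0 → Projective M.X1 →
    ∃ (P Q P' Q' : R) (f : P ⟶ Q) (g : P' ⟶ Q'),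
      Projective P ∧ Projective Q ∧ Projective P' ∧ Projective Q' ∧
      Mono f ∧ Mono g ∧
      Nonempty (M ≅ Z2Cx.dsum R (Z2Cx.Cf R f) (Z2Cx.dagger R (Z2Cx.Cf R g))) ∧
      cplus M = K0.cls R P ∧ cminus M = K0.cls R P'

variable {k R}

/-- `μ(M•,N•) = Σ_{i,j} ⟨[Mᵢ^{ε(j)}], [N_{j+1}^{ε(i)}]⟩`. -/
def mu (ed : EulerData k R) (dd : DecData R) (M N : Z2Cx R) : ℚ :=
  ed.eQ (K0.cls R M.X0 - dd.cminus M) (dd.cplus N) +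
    ed.eQ (dd.cplus M) (K0.cls R N.X1 - dd.cplus N) +
    ed.eQ (dd.cminus M) (K0.cls R N.X0 - dd.cminus N) +
    ed.eQ (K0.cls R M.X1 - dd.cplus M) (dd.cminus N)

/-- `h(M•,N•) = q^{μ(M•,N•)} ⬝ |Hom_{C(R)}(H•(M•), H•(N•))|`. -/
def hVal (ed : EulerData k R) (dd : DecData R) (M N : Z2Cx R) : ℝ :=
  (Fintype.card k : ℝ) ^ ((mu ed dd M N : ℚ) : ℝ) *
    (Nat.card (Z2Cx.Hcx R M ⟶ Z2Cx.Hcx R N) : ℝ)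

/-- The structure constants of the Hall algebra `H(C_fin(P))`:
the coefficient of the basis element `c` in `[M•] ⋆ [N•]`. -/
def hallCoeff (v : ℝ) (ed : EulerData k R) (dd : DecData R) (M N : Z2Cx R)
    (c : CxCls R) : ℂ :=
  (((v ^ (((ed.eQ (K0.cls R M.X0) (K0.cls R N.X0) +
      ed.eQ (K0.cls R M.X1) (K0.cls R N.X1) : ℚ)) : ℝ) *
    (extCount R M N c : ℝ) / hVal ed dd M N : ℝ)) : ℂ)

variable (k R)

/-- Objects of `C_fin(P)`. -/
def FCx := {M : Z2Cx R // FinCx R M}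

/-- Isomorphism classes of objects of `C_fin(P)`. -/
def FCls := Quot (fun M N : FCx R => Nonempty (M.1 ≅ N.1))

/-- The isomorphism class of an object of `C_fin(P)`. -/
def fcls (M : FCx R) : FCls R := Quot.mk _ M

/-- Comparison of isomorphism classes in `C_fin(P)` with isomorphism classes of
arbitrary complexes. -/
def fc2c : FCls R → CxCls R :=
  Quot.lift (fun M => ccls R M.1) (fun _ _ h => Quot.sound h)

/-- The symmetrized Euler form `(α,β) = ⟨α,β⟩ + ⟨β,α⟩`. -/
def sForm (ed : EulerData k R) (a b : K0 R) : ℚ := ed.eQ a b + ed.eQ b a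

open ZeroObject in
/-- The zero complex. -/
def zeroCx : Z2Cx R := ⟨0, 0, 0, 0, by simp, by simp⟩

/-- All the data constituting the localized Hall algebra `DH(R)`:
the Hall algebra `H(C_fin(P))` (a free `ℂ`-module on the isomorphism classes of
`C_fin(P)`, with the Hall multiplication `mulH` determined by the structure constants
`hallCoeff`), and its localization `D` at the classes of acyclic complexes, together
with the elements `K_α ⋆ K_β^† = KK (α, β)` and the canonical map `loc`.  The axioms
express that `D` is precisely the localization of `H(C_fin(P))` at the classes of
acyclic complexes, with the `ℂ[K(R) × K(R)]`-bimodule structure of the paper. -/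
structure DHSetting where
  v : ℝ
  v_pos : 0 < v
  v_sq : v ^ 2 = (Fintype.card k : ℝ)
  ed : EulerData k R
  dd : DecData R
  /-- the Hall multiplication on `H(C_fin(P))` -/
  mulH : ((FCls R) →₀ ℂ) →ₗ[ℂ] ((FCls R) →₀ ℂ) →ₗ[ℂ] ((FCls R) →₀ ℂ)
  mulH_single : ∀ (M N : FCx R) (c : FCls R),
    (mulH (Finsupp.single (fcls R M) 1) (Finsupp.single (fcls R N) 1)) c
      = hallCoeff v ed dd M.1 N.1 (fc2c R c)
  /-- the carrier of the localized Hall algebra `DH(R)` -/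
  D : Type u
  [grp : AddCommGroup D]
  [mod : Module ℂ D]
  /-- the multiplication `⋆` of `DH(R)` -/
  mulD : D →ₗ[ℂ] D →ₗ[ℂ] D
  one : D
  one_mul : ∀ d, mulD one d = d
  mul_one : ∀ d, mulD d one = d
  /-- the canonical map `H(C_fin(P)) → DH(R)` -/
  loc : ((FCls R) →₀ ℂ) →ₗ[ℂ] D
  loc_one : ∀ h : FinCx R (zeroCx R),
    loc (Finsupp.single (fcls R ⟨zeroCx R, h⟩) 1) = one
  loc_mul : ∀ x y, mulD (loc x) (loc y) = loc (mulH x y)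
  /-- the elements `K_α ⋆ K_β^†` -/
  KK : K0 R × K0 R → D
  KK_zero : KK 0 = one
  KK_mul : ∀ a b, mulD (KK a) (KK b) = KK (a + b)
  KK_P : ∀ (P : R), Projective P → ∀ h : FinCx R (Z2Cx.KP R P),
    loc (Finsupp.single (fcls R ⟨Z2Cx.KP R P, h⟩) 1) = KK (K0.cls R P, 0)
  KK_Pd : ∀ (P : R), Projective P → ∀ h : FinCx R (Z2Cx.dagger R (Z2Cx.KP R P)),
    loc (Finsupp.single (fcls R ⟨Z2Cx.dagger R (Z2Cx.KP R P), h⟩) 1) = KK (0, K0.cls R P)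
  /-- the bimodule rule `(K_α ⋆ K_β^†) ⋆ [M•] = v^{(α-β,[M•])} [M•] ⋆ (K_α ⋆ K_β^†)` -/
  comm_rule : ∀ (a b : K0 R) (M : FCx R),
    mulD (KK (a, b)) (loc (Finsupp.single (fcls R M) 1)) =
      (((v ^ ((sForm k R ed (a - b) (clsOf R M.1) : ℚ) : ℝ) : ℝ) : ℂ)) •
        mulD (loc (Finsupp.single (fcls R M) 1)) (KK (a, b))
  /-- multiplication of elements in standard form is induced by the Hall multiplication -/
  mul_general : ∀ (x : (FCls R) →₀ ℂ) (M : FCx R) (a b a' b' : K0 R),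
    mulD (mulD (loc x) (KK (a, b))) (mulD (loc (Finsupp.single (fcls R M) 1)) (KK (a', b'))) =
      (((v ^ ((sForm k R ed (a - b) (clsOf R M.1) : ℚ) : ℝ) : ℝ) : ℂ)) •
        mulD (loc (mulH x (Finsupp.single (fcls R M) 1))) (KK (a + a', b + b'))
  /-- every element of the localization has the standard form `x ⋆ K_α ⋆ K_β^†` -/
  span : ∀ d : D, ∃ (x : (FCls R) →₀ ℂ) (a b : K0 R), d = mulD (loc x) (KK (a, b))
  /-- the kernel of the localization map is exactly the torsion with respect to the
  classes of acyclic complexes -/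
  loc_ker : ∀ x, loc x = 0 ↔ ∃ (K : Z2Cx R) (h : FinCx R K),
    Z2Cx.Acyclic R K ∧ mulH x (Finsupp.single (fcls R ⟨K, h⟩) 1) = 0

attribute [instance] DHSetting.grp DHSetting.mod

variable {k R}

/-- The element `E_{M•} = v^{⟨[M₁⁺]-[M₀⁻],[M•]⟩} K_{-[M₁⁺]} ⋆ K^†_{-[M₀⁻]} ⋆ [M•]`
of the localized Hall algebra. -/
def Eelt (S : DHSetting k R) (M : Z2Cx R) (h : FinCx R M) : S.D :=
  (((S.v ^ ((S.ed.eQ (S.dd.cplus M - S.dd.cminus M) (clsOf R M) : ℚ) : ℝ) : ℝ) : ℂ)) •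
    S.mulD (S.KK (-(S.dd.cplus M), -(S.dd.cminus M)))
      (S.loc (Finsupp.single (fcls R ⟨M, h⟩) 1))

/-!
Let `0 ⟶ P ⟶ Q ⟶ A ⟶ 0` be a projective resolution with two-term complex `C`. Extensions of `C`
by `C†` are classified by endomorphisms of `A`: lift the endomorphism to the resolution and use the
lift to glue `C` and `C†`. The zero endomorphism gives `C ⊕ C†`, while an automorphism of the
resolution makes the middle term contractible, isomorphic to `K_P ⊕ K_Q†`. If `End A = k` with
`A ≠ 0`, the `q - 1` nonzero endomorphisms are all of the second kind, so up to a power of `v`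
the product `[C] ⋆ [C†]` is `[C ⊕ C†] + (q - 1)[K_P ⊕ K_Q†]`. Applying `†` gives
`[C†] ⋆ [C]` with the same power of `v` and `[K_Q ⊕ K_P†]` in place of `[K_P ⊕ K_Q†]`. In the
commutator the terms `[C ⊕ C†]` cancel; the other two become `K_[P] ⋆ K†_[Q]` and
`K_[Q] ⋆ K†_[P]` in `DH(R)`, and the factor `K_{-[P]} ⋆ K†_{-[P]}` contained in
`E_A ⋆ F_A` turns them into `K†_[A]` and `K_[A]`, because `[Q] - [P] = [A]`.
-/

lemma card_fiber_of_forall_ne {α β : Type*} [Finite α] {F : α → β} {a : α} {b : β}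
    (h : ∀ x ≠ a, F x = b) (c : β) :
    Nat.card {x // F x = c} =
      (if F a = c then 1 else 0) + (Nat.card α - 1) * (if b = c then 1 else 0) := by
  have := Fintype.ofFinite α
  have hsum : ∑ x ∈ Finset.univ.erase a, (if F x = c then 1 else 0) =
      ∑ _x ∈ Finset.univ.erase a, (if b = c then 1 else 0) :=
    Finset.sum_congr rfl fun x hx => by rw [h x (Finset.ne_of_mem_erase hx)]
  rw [Nat.card_eq_fintype_card, Nat.card_eq_fintype_card, Fintype.card_subtype,
    Finset.card_filter, ← Finset.add_sum_erase _ _ (Finset.mem_univ a), hsum, Finset.sum_const,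
    Finset.card_erase_of_mem (Finset.mem_univ a), Finset.card_univ, smul_eq_mul]

section Abelian

variable {C : Type*} [Category C] [Abelian C]

lemma isZero_of_mono_eq_zero {X Y : C} {g : X ⟶ Y} [Mono g] (h : g = 0) : IsZero X := by
  rw [IsZero.iff_id_eq_zero, ← cancel_mono g, h, comp_zero, comp_zero]

lemma neg_biprod_map {X Y X' Y' : C} (f : X ⟶ X') (g : Y ⟶ Y') :
    -biprod.map f g = biprod.map (-f) (-g) := by
  ext <;> simp

lemma shortExact_biprod_inr_fst (X Y : C) :
    (ShortComplex.mk (biprod.inr : Y ⟶ X ⊞ Y) (biprod.fst : X ⊞ Y ⟶ X) (by simp)).ShortExact :=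
  ShortComplex.Splitting.shortExact
    { r := biprod.snd
      s := biprod.inl
      id := by simp [add_comm, biprod.total] }

lemma shortExact_id_zero {X Z : C} (hZ : IsZero Z) :
    (ShortComplex.mk (𝟙 X) (0 : X ⟶ Z) comp_zero).ShortExact :=
  have : IsIso (ShortComplex.mk (𝟙 X) (0 : X ⟶ Z) comp_zero).f := inferInstanceAs (IsIso (𝟙 X))
  (ShortComplex.Splitting.ofIsIsoOfIsZero _ this hZ).shortExact

lemma exists_hom_τ₃_eq {T U : ShortComplex C} [Projective T.X₂] (hU : U.ShortExact)
    (φ : T.X₃ ⟶ U.X₃) : ∃ α : T ⟶ U, α.τ₃ = φ := by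
  have := hU.mono_f
  have := hU.epi_g
  have h₂ : Projective.factorThru (T.g ≫ φ) U.g ≫ U.g = T.g ≫ φ := Projective.factorThru_comp _ _
  exact ⟨
    { τ₁ := hU.exact.lift (T.f ≫ Projective.factorThru (T.g ≫ φ) U.g) (by simp [h₂])
      τ₂ := Projective.factorThru (T.g ≫ φ) U.g
      τ₃ := φ
      comm₁₂ := hU.exact.lift_f _ _
      comm₂₃ := h₂ }, rfl⟩

end Abelian

lemma card_end_of_forall_eq_smul_id {K C : Type*} [Field K] [Category C] [Preadditive C]
    [Linear K C] {A : C} (hA : ¬ IsZero A) (hEnd : ∀ φ : A ⟶ A, ∃ c : K, φ = c • 𝟙 A) :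
    Nat.card (A ⟶ A) = Nat.card K := by
  have hid : 𝟙 A ≠ 0 := fun h => hA ((IsZero.iff_id_eq_zero A).2 h)
  refine (Nat.card_congr (Equiv.ofBijective (fun c : K => c • 𝟙 A) ⟨?_, fun φ => ?_⟩)).symm
  · exact smul_left_injective K hid
  · obtain ⟨c, hc⟩ := hEnd φ
    exact ⟨c, hc.symm⟩

lemma finite_end_of_forall_eq_smul_id {K C : Type*} [Semiring K] [Finite K] [Category C]
    [Preadditive C] [Linear K C] {A : C} (hEnd : ∀ φ : A ⟶ A, ∃ c : K, φ = c • 𝟙 A) :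
    Finite (A ⟶ A) :=
  Finite.of_surjective (fun c : K => c • 𝟙 A) fun φ => (hEnd φ).imp fun _ => Eq.symm

section

variable {C : Type u} [SmallCategory C]

lemma IsFinHom.of_isZero {X : C} (hX : IsZero X) : IsFinHom C X := fun M =>
  have : Subsingleton (M ⟶ X) := ⟨fun _ _ => hX.eq_of_tgt _ _⟩
  inferInstance

lemma IsFinHom.of_iso {X Y : C} (e : X ≅ Y) (hX : IsFinHom C X) : IsFinHom C Y := fun M =>
  have := hX M
  Finite.of_equiv _ e.homToEquiv

lemma IsFinHom.of_add_eq_id [Preadditive C] {X X₁ X₂ : C} {p₁ : X ⟶ X₁} {i₁ : X₁ ⟶ X}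
    {p₂ : X ⟶ X₂} {i₂ : X₂ ⟶ X} (h : p₁ ≫ i₁ + p₂ ≫ i₂ = 𝟙 X) (h₁ : IsFinHom C X₁)
    (h₂ : IsFinHom C X₂) : IsFinHom C X := fun M => by
  have := h₁ M
  have := h₂ M
  refine Finite.of_injective (fun x : M ⟶ X => (x ≫ p₁, x ≫ p₂)) fun x y hxy => ?_
  have e₁ : x ≫ p₁ = y ≫ p₁ := congrArg Prod.fst hxy
  have e₂ : x ≫ p₂ = y ≫ p₂ := congrArg Prod.snd hxy
  rw [← Category.comp_id x, ← Category.comp_id y, ← h, Preadditive.comp_add,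
    Preadditive.comp_add, reassoc_of% e₁, reassoc_of% e₂]

end

section AbelianCategory

variable {R : Type u} [SmallCategory R] [Abelian R]

namespace K0

lemma cls_eq_add_of_shortExact {T : ShortComplex R} (hT : T.ShortExact) :
    cls R T.X₂ = cls R T.X₁ + cls R T.X₃ := by
  have h : cls R T.X₂ - cls R T.X₁ - cls R T.X₃ = 0 :=
    (QuotientAddGroup.eq_zero_iff _).2 (AddSubgroup.subset_closure ⟨T, hT, rfl⟩)
  rwa [sub_sub, sub_eq_zero] at h

lemma cls_biprod (X Y : R) : cls R (X ⊞ Y) = cls R X + cls R Y :=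
  cls_eq_add_of_shortExact (ShortComplex.Splitting.ofHasBinaryBiproduct X Y).shortExact

lemma cls_eq_add_of_iso {X Y Z : R} (hX : IsZero X) (e : Y ≅ Z) :
    cls R Y = cls R X + cls R Z :=
  have : IsIso (ShortComplex.mk (0 : X ⟶ Y) e.hom zero_comp).g := e.isIso_hom
  cls_eq_add_of_shortExact (ShortComplex.Splitting.ofIsZeroOfIsIso _ hX this).shortExact

lemma cls_of_isZero {X : R} (hX : IsZero X) : cls R X = 0 :=
  left_eq_add.1 (cls_eq_add_of_iso hX (Iso.refl X))

open ZeroObject in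
lemma cls_eq_of_iso {X Y : R} (e : X ≅ Y) : cls R X = cls R Y := by
  simpa only [cls_of_isZero (isZero_zero R), zero_add] using
    cls_eq_add_of_iso (isZero_zero R) e

end K0

lemma IsFinHom.homology_biprod {T U : ShortComplex R} (hT : IsFinHom R T.homology)
    (hU : IsFinHom R U.homology) (w : biprod.map T.f U.f ≫ biprod.map T.g U.g = 0) :
    IsFinHom R (ShortComplex.mk _ _ w).homology := by
  let p₁ : ShortComplex.mk _ _ w ⟶ T := ⟨biprod.fst, biprod.fst, biprod.fst, by simp, by simp⟩
  let i₁ : T ⟶ ShortComplex.mk _ _ w := ⟨biprod.inl, biprod.inl, biprod.inl, by simp, by simp⟩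
  let p₂ : ShortComplex.mk _ _ w ⟶ U := ⟨biprod.snd, biprod.snd, biprod.snd, by simp, by simp⟩
  let i₂ : U ⟶ ShortComplex.mk _ _ w := ⟨biprod.inr, biprod.inr, biprod.inr, by simp, by simp⟩
  have total : p₁ ≫ i₁ + p₂ ≫ i₂ = 𝟙 _ :=
    ShortComplex.hom_ext _ _ biprod.total biprod.total biprod.total
  refine of_add_eq_id (p₁ := ShortComplex.homologyMap p₁) (i₁ := ShortComplex.homologyMap i₁)
    (p₂ := ShortComplex.homologyMap p₂) (i₂ := ShortComplex.homologyMap i₂) ?_ hT hU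
  rw [← ShortComplex.homologyMap_comp, ← ShortComplex.homologyMap_comp,
    ← ShortComplex.homologyMap_add, total, ShortComplex.homologyMap_id]

namespace Z2Cx

section Isomorphisms

/-- The isomorphism of `ℤ/2`-graded complexes with given isomorphisms in both degrees. -/
def isoMk {M N : Z2Cx R} (e₀ : M.X0 ≅ N.X0) (e₁ : M.X1 ≅ N.X1)
    (h₀ : M.d0 ≫ e₁.hom = e₀.hom ≫ N.d0) (h₁ : M.d1 ≫ e₀.hom = e₁.hom ≫ N.d1) : M ≅ N where
  hom := ⟨e₀.hom, e₁.hom, h₀, h₁⟩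
  inv := ⟨e₀.inv, e₁.inv,
    by rw [Iso.comp_inv_eq, Category.assoc, h₀, Iso.inv_hom_id_assoc],
    by rw [Iso.comp_inv_eq, Category.assoc, h₁, Iso.inv_hom_id_assoc]⟩
  hom_inv_id := Hom.ext e₀.hom_inv_id e₁.hom_inv_id
  inv_hom_id := Hom.ext e₀.inv_hom_id e₁.inv_hom_id

/-- The functor sending a `ℤ/2`-graded complex to its degree-`0` component. -/
def eval₀ : Z2Cx R ⥤ R where
  obj M := M.X0
  map f := Hom.f0 f

/-- The functor sending a `ℤ/2`-graded complex to its degree-`1` component. -/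
def eval₁ : Z2Cx R ⥤ R where
  obj M := M.X1
  map f := Hom.f1 f

lemma ccls_eq_ccls_iff {M N : Z2Cx R} : ccls R M = ccls R N ↔ Nonempty (M ≅ N) :=
  Equivalence.quot_mk_eq_iff
    ⟨fun _ => ⟨Iso.refl _⟩, fun ⟨e⟩ => ⟨e.symm⟩, fun ⟨e⟩ ⟨e'⟩ => ⟨e ≪≫ e'⟩⟩ M N

lemma ccls_dsum_comm (M N : Z2Cx R) : ccls R (dsum R M N) = ccls R (dsum R N M) :=
  ccls_eq_ccls_iff.2 ⟨isoMk (biprod.braiding _ _) (biprod.braiding _ _)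
    (biprod.braid_natural _ _) (biprod.braid_natural _ _)⟩

end Isomorphisms

/-! ### The shift involution -/

section Dagger

lemma dagger_dagger (M : Z2Cx R) : dagger R (dagger R M) = M := by
  obtain ⟨⟩ := M
  exact Z2Cx.mk.injEq .. |>.mpr ⟨rfl, rfl, heq_of_eq (neg_neg _), heq_of_eq (neg_neg _)⟩

lemma dagger_dsum (M N : Z2Cx R) :
    dagger R (dsum R M N) = dsum R (dagger R M) (dagger R N) := by
  simp only [dagger, dsum, Z2Cx.mk.injEq, heq_eq_eq, true_and]
  exact ⟨neg_biprod_map _ _, neg_biprod_map _ _⟩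

/-- The shift involution `†` as an endofunctor of the category of `ℤ/2`-graded complexes. -/
def daggerFunctor : Z2Cx R ⥤ Z2Cx R where
  obj := dagger R
  map f := ⟨Hom.f1 f, Hom.f0 f, by simp [dagger, Hom.comm1 f], by simp [dagger, Hom.comm0 f]⟩

/-- `†` is fully faithful: it does not change the components of a morphism. -/
def daggerFullyFaithful : (daggerFunctor (R := R)).FullyFaithful where
  preimage f := ⟨Hom.f1 f, Hom.f0 f,
    by simpa [daggerFunctor, dagger] using Hom.comm1 f,
    by simpa [daggerFunctor, dagger] using Hom.comm0 f⟩

/-- The action of `†` on isomorphism classes of `ℤ/2`-graded complexes. -/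
def daggerCls : CxCls R → CxCls R :=
  Quot.map (dagger R) fun _ _ ⟨e⟩ => ⟨daggerFunctor.mapIso e⟩

lemma daggerCls_daggerCls (c : CxCls R) : daggerCls (daggerCls c) = c := by
  obtain ⟨M⟩ := c
  exact congrArg (ccls R) (dagger_dagger M)

lemma eq_daggerCls_iff {c c' : CxCls R} : c = daggerCls c' ↔ daggerCls c = c' :=
  ⟨fun h => by rw [h, daggerCls_daggerCls], fun h => by rw [← h, daggerCls_daggerCls]⟩

lemma daggerCls_ccls_dsum_dagger (M N : Z2Cx R) :
    daggerCls (ccls R (dsum R M (dagger R N))) = ccls R (dsum R N (dagger R M)) := by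
  change ccls R (dagger R (dsum R M (dagger R N))) = _
  rw [dagger_dsum, dagger_dagger, ccls_dsum_comm]

/-- The homology in degree `0` of `M†` is the homology in degree `1` of `M`. -/
def H0DaggerIso (M : Z2Cx R) : H0 R (dagger R M) ≅ H1 R M :=
  ShortComplex.homologyMapIso
    (ShortComplex.isoMk (Iso.refl M.X0) (-Iso.refl M.X1) (Iso.refl M.X0)
      (by simp [dagger]) (by simp [dagger]))

/-- The homology in degree `1` of `M†` is the homology in degree `0` of `M`. -/
def H1DaggerIso (M : Z2Cx R) : H1 R (dagger R M) ≅ H0 R M :=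
  ShortComplex.homologyMapIso
    (ShortComplex.isoMk (Iso.refl M.X1) (-Iso.refl M.X0) (Iso.refl M.X1)
      (by simp [dagger]) (by simp [dagger]))

/-- The homology complex commutes with `†`. -/
def HcxDaggerIso (M : Z2Cx R) : Hcx R (dagger R M) ≅ daggerFunctor.obj (Hcx R M) :=
  isoMk (H0DaggerIso M) (H1DaggerIso M) (by simp [Hcx, daggerFunctor, dagger])
    (by simp [Hcx, daggerFunctor, dagger])

lemma card_Hcx_dagger_hom (M N : Z2Cx R) :
    Nat.card (Hcx R (dagger R M) ⟶ Hcx R (dagger R N)) = Nat.card (Hcx R M ⟶ Hcx R N) :=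
  Nat.card_congr (((HcxDaggerIso M).homCongr (HcxDaggerIso N)).trans
    daggerFullyFaithful.homEquiv.symm)

end Dagger

end Z2Cx

namespace FinCx

lemma dagger {M : Z2Cx R} (h : FinCx R M) : FinCx R (Z2Cx.dagger R M) :=
  ⟨h.2.1, h.1, h.2.2.2.of_iso (Z2Cx.H0DaggerIso M).symm,
    h.2.2.1.of_iso (Z2Cx.H1DaggerIso M).symm⟩

lemma dsum {M N : Z2Cx R} (hM : FinCx R M) (hN : FinCx R N) : FinCx R (Z2Cx.dsum R M N) := by
  obtain ⟨_, _, hM₀, hM₁⟩ := hM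
  obtain ⟨_, _, hN₀, hN₁⟩ := hN
  exact ⟨inferInstanceAs (Projective (M.X0 ⊞ N.X0)), inferInstanceAs (Projective (M.X1 ⊞ N.X1)),
    hM₀.homology_biprod hN₀ _, hM₁.homology_biprod hN₁ _⟩

end FinCx

namespace Z2Cx

lemma isZero_H1_Cf {P Q : R} (f : P ⟶ Q) [Mono f] : IsZero (H1 R (Cf R f)) :=
  (ShortComplex.exact_iff_isZero_homology _).1 ((ShortComplex.exact_iff_mono _ rfl).2 ‹Mono f›)

lemma isZero_H0_KP (P : R) : IsZero (H0 R (KP R P)) :=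
  (ShortComplex.exact_iff_isZero_homology _).1
    ((ShortComplex.exact_iff_epi _ rfl).2 (inferInstanceAs (Epi (𝟙 P))))

lemma finCx_KP (P : R) [Projective P] : FinCx R (KP R P) :=
  ⟨‹_›, ‹_›, IsFinHom.of_isZero (isZero_H0_KP P), IsFinHom.of_isZero (isZero_H1_Cf (𝟙 P))⟩

/-! ### Extension classes -/

namespace ExtSES

variable {M N : Z2Cx R}

lemma extEquiv_equivalence : Equivalence (ExtEquiv M N) where
  refl _ := ⟨Iso.refl _, Category.comp_id _, Category.id_comp _⟩
  symm := fun ⟨φ, hi, hp⟩ => ⟨φ.symm, by simp [← hi], by simp [← hp]⟩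
  trans := fun ⟨φ, hi, hp⟩ ⟨ψ, hi', hp'⟩ => ⟨φ ≪≫ ψ, by simp [← hi', ← hi], by simp [← hp, ← hp']⟩

lemma extCl_mk_eq_iff {s t : ExtSES M N} :
    (Quot.mk _ s : ExtCl M N) = Quot.mk _ t ↔ ExtEquiv M N s t :=
  extEquiv_equivalence.quot_mk_eq_iff s t

/-- The morphism of short exact sequences in degree `0` given by a morphism of extensions. -/
def shortComplexHom₀ {s t : ExtSES M N} (φ : s.E ⟶ t.E) (hi : s.i ≫ φ = t.i)
    (hp : φ ≫ t.p = s.p) : ShortComplex.mk _ _ s.w0 ⟶ ShortComplex.mk _ _ t.w0 where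
  τ₁ := 𝟙 _
  τ₂ := Hom.f0 φ
  τ₃ := 𝟙 _
  comm₁₂ := (Category.id_comp _).trans (congrArg Hom.f0 hi).symm
  comm₂₃ := (congrArg Hom.f0 hp).trans (Category.comp_id _).symm

/-- The morphism of short exact sequences in degree `1` given by a morphism of extensions. -/
def shortComplexHom₁ {s t : ExtSES M N} (φ : s.E ⟶ t.E) (hi : s.i ≫ φ = t.i)
    (hp : φ ≫ t.p = s.p) : ShortComplex.mk _ _ s.w1 ⟶ ShortComplex.mk _ _ t.w1 where
  τ₁ := 𝟙 _
  τ₂ := Hom.f1 φ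
  τ₃ := 𝟙 _
  comm₁₂ := (Category.id_comp _).trans (congrArg Hom.f1 hi).symm
  comm₂₃ := (congrArg Hom.f1 hp).trans (Category.comp_id _).symm

lemma extEquiv_of_hom {s t : ExtSES M N} (φ : s.E ⟶ t.E) (hi : s.i ≫ φ = t.i)
    (hp : φ ≫ t.p = s.p) : ExtEquiv M N s t := by
  have isIso₀ : IsIso (shortComplexHom₀ φ hi hp).τ₂ :=
    have : IsIso (shortComplexHom₀ φ hi hp).τ₁ := inferInstanceAs (IsIso (𝟙 _))
    have : IsIso (shortComplexHom₀ φ hi hp).τ₃ := inferInstanceAs (IsIso (𝟙 _))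
    ShortComplex.isIso₂_of_shortExact_of_isIso₁₃ _ s.ex0 t.ex0
  have isIso₁ : IsIso (shortComplexHom₁ φ hi hp).τ₂ :=
    have : IsIso (shortComplexHom₁ φ hi hp).τ₁ := inferInstanceAs (IsIso (𝟙 _))
    have : IsIso (shortComplexHom₁ φ hi hp).τ₃ := inferInstanceAs (IsIso (𝟙 _))
    ShortComplex.isIso₂_of_shortExact_of_isIso₁₃ _ s.ex1 t.ex1
  have : IsIso (Hom.f0 φ) := isIso₀
  have : IsIso (Hom.f1 φ) := isIso₁
  exact ⟨isoMk (asIso (Hom.f0 φ)) (asIso (Hom.f1 φ)) (Hom.comm0 φ) (Hom.comm1 φ), hi, hp⟩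

/-- The extension of `M†` by `N†` obtained by applying `†` to an extension of `M` by `N`. -/
def dagger (s : ExtSES M N) : ExtSES (Z2Cx.dagger R M) (Z2Cx.dagger R N) :=
  ⟨Z2Cx.dagger R s.E, daggerFunctor.map s.i, daggerFunctor.map s.p, s.w1, s.w0, s.ex1, s.ex0⟩

lemma dagger_surjective : Function.Surjective (dagger : ExtSES M N → _) := by
  rintro ⟨E, i, p, w0, w1, ex0, ex1⟩
  obtain ⟨E, rfl⟩ : ∃ E', E = Z2Cx.dagger R E' := ⟨_, (dagger_dagger E).symm⟩
  exact ⟨⟨E, daggerFullyFaithful.preimage i, daggerFullyFaithful.preimage p, w1, w0, ex1, ex0⟩,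
    rfl⟩

lemma extEquiv_dagger_iff {s t : ExtSES M N} :
    ExtEquiv _ _ s.dagger t.dagger ↔ ExtEquiv M N s t := by
  refine ⟨fun ⟨φ, hi, hp⟩ => ?_, fun ⟨φ, hi, hp⟩ => ?_⟩
  · refine extEquiv_of_hom (daggerFullyFaithful.preimage (X := s.E) (Y := t.E) φ.hom) ?_ ?_
    · exact Hom.ext (congrArg Hom.f1 hi) (congrArg Hom.f0 hi)
    · exact Hom.ext (congrArg Hom.f1 hp) (congrArg Hom.f0 hp)
  · exact ⟨daggerFunctor.mapIso φ, congrArg daggerFunctor.map hi, congrArg daggerFunctor.map hp⟩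

/-- The bijection on classes of extensions induced by `†`. -/
def extClDaggerEquiv (M N : Z2Cx R) :
    ExtCl M N ≃ ExtCl (Z2Cx.dagger R M) (Z2Cx.dagger R N) :=
  Equiv.ofBijective (Quot.map dagger fun _ _ => extEquiv_dagger_iff.2) <| by
    constructor
    · rintro ⟨s⟩ ⟨t⟩ h
      exact extCl_mk_eq_iff.2 (extEquiv_dagger_iff.1 (extCl_mk_eq_iff.1 h))
    · rintro ⟨t⟩
      obtain ⟨s, rfl⟩ := dagger_surjective t
      exact ⟨Quot.mk _ s, rfl⟩

lemma extCount_dagger (M N : Z2Cx R) (c : CxCls R) :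
    extCount R (Z2Cx.dagger R M) (Z2Cx.dagger R N) c = extCount R M N (daggerCls c) := by
  refine (Nat.card_congr ((extClDaggerEquiv M N).subtypeEquiv ?_)).symm
  rintro ⟨s⟩
  exact eq_daggerCls_iff

end ExtSES

section Cone

variable {T U : ShortComplex R}

/-- The middle term of the extension of `C_{T.f}` by `C_{U.f}†` attached to a morphism `α` of
short complexes: the two differentials `T.f` and `-U.f` are glued by the chain map
`(α.τ₁, α.τ₂)`. -/
def cone (α : T ⟶ U) : Z2Cx R where
  X0 := T.X₂ ⊞ U.X₁
  X1 := T.X₁ ⊞ U.X₂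
  d0 := biprod.desc (α.τ₂ ≫ biprod.inr) (-(U.f ≫ biprod.inr))
  d1 := biprod.desc (T.f ≫ biprod.inl + α.τ₁ ≫ biprod.inr) 0
  d01 := by ext <;> simp
  d10 := by
    apply biprod.hom_ext' <;> apply biprod.hom_ext <;> simp [reassoc_of% α.comm₁₂]

lemma ccls_cone_zero :
    ccls R (cone (0 : T ⟶ U)) = ccls R (dsum R (Cf R T.f) (dagger R (Cf R U.f))) := by
  refine ccls_eq_ccls_iff.2 ⟨isoMk (Iso.refl _) (Iso.refl _) ?_ ?_⟩
  · apply biprod.hom_ext' <;> simp [cone, dsum, Cf, dagger]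
  · apply biprod.hom_ext' <;> simp [cone, dsum, Cf, dagger]

lemma ccls_cone_of_isIso (α : T ⟶ U) [IsIso α.τ₁] [IsIso α.τ₂] :
    ccls R (cone α) = ccls R (dsum R (KP R T.X₁) (dagger R (KP R U.X₂))) := by
  have comm : inv α.τ₁ ≫ T.f = U.f ≫ inv α.τ₂ := by
    rw [IsIso.inv_comp_eq, ← Category.assoc, α.comm₁₂, Category.assoc, IsIso.hom_inv_id,
      Category.comp_id]
  let e : T.X₂ ⊞ U.X₁ ≅ T.X₁ ⊞ U.X₂ :=
    { hom := biprod.desc (-(α.τ₂ ≫ biprod.inr)) (inv α.τ₁ ≫ biprod.inl + U.f ≫ biprod.inr)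
      inv := biprod.desc (α.τ₁ ≫ biprod.inr + T.f ≫ biprod.inl) (-(inv α.τ₂ ≫ biprod.inl))
      hom_inv_id := by apply biprod.hom_ext' <;> simp [reassoc_of% comm]
      inv_hom_id := by apply biprod.hom_ext' <;> simp [reassoc_of% α.comm₁₂] }
  refine ccls_eq_ccls_iff.2 ⟨isoMk (M := cone α)
    (N := dsum R (KP R T.X₁) (dagger R (KP R U.X₂))) e (Iso.refl _) ?_ ?_⟩
  · apply biprod.hom_ext' <;> simp [cone, dsum, KP, dagger, e]
  · apply biprod.hom_ext' <;> simp [cone, dsum, KP, dagger, e, reassoc_of% α.comm₁₂]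

namespace ExtSES

/-- The extension of `C_{T.f}` by `C_{U.f}†` with middle term `cone α`. -/
def ofHom (α : T ⟶ U) : ExtSES (Cf R T.f) (Z2Cx.dagger R (Cf R U.f)) where
  E := cone α
  i := ⟨biprod.inr, biprod.inr, by simp [cone, Z2Cx.dagger, Cf],
    by simp [cone, Z2Cx.dagger, Cf]⟩
  p := ⟨biprod.fst, biprod.fst, by simp only [cone, Cf]; ext <;> simp,
    by simp only [cone, Cf]; ext <;> simp⟩
  w0 := biprod.inr_fst
  w1 := biprod.inr_fst
  ex0 := shortExact_biprod_inr_fst _ _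
  ex1 := shortExact_biprod_inr_fst _ _

lemma extEquiv_ofHom_of_τ₃_eq (hU : U.ShortExact) [Projective T.X₂] {α β : T ⟶ U}
    (h : α.τ₃ = β.τ₃) : ExtEquiv _ _ (ofHom α) (ofHom β) := by
  have := hU.mono_f
  obtain ⟨s, hs⟩ : ∃ s : T.X₂ ⟶ U.X₁, s ≫ U.f = α.τ₂ - β.τ₂ :=
    ⟨hU.exact.lift (α.τ₂ - β.τ₂) (by rw [Preadditive.sub_comp, α.comm₂₃, β.comm₂₃, h, sub_self]),
      hU.exact.lift_f _ _⟩
  have hs' : T.f ≫ s = α.τ₁ - β.τ₁ := by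
    rw [← cancel_mono U.f, Category.assoc, hs, Preadditive.comp_sub, Preadditive.sub_comp,
      α.comm₁₂, β.comm₁₂]
  let φ : cone α ⟶ cone β :=
    { f0 := 𝟙 _ - biprod.fst ≫ s ≫ biprod.inr
      f1 := 𝟙 _
      comm0 := by
        apply biprod.hom_ext' <;> simp [cone, reassoc_of% hs]
      comm1 := by
        apply biprod.hom_ext'
        · simp only [cone, Preadditive.comp_sub, Category.comp_id, biprod.inl_desc,
            biprod.inl_desc_assoc, Preadditive.add_comp, Category.assoc,
            BinaryBicone.inl_fst_assoc, reassoc_of% hs', Preadditive.sub_comp,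
            BinaryBicone.inr_fst_assoc, zero_comp, comp_zero, add_zero, Category.id_comp]
          abel
        · simp [cone] }
  have hi₀ : (biprod.inr : U.X₁ ⟶ T.X₂ ⊞ U.X₁) ≫ (𝟙 _ - biprod.fst ≫ s ≫ biprod.inr) =
      biprod.inr := by simp
  have hp₀ : (𝟙 (T.X₂ ⊞ U.X₁) - biprod.fst ≫ s ≫ biprod.inr) ≫ biprod.fst = biprod.fst := by
    simp
  exact extEquiv_of_hom φ (Hom.ext hi₀ (Category.comp_id _)) (Hom.ext hp₀ (Category.id_comp _))

lemma τ₃_eq_of_extEquiv_ofHom [Epi T.g] {α β : T ⟶ U}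
    (h : ExtEquiv _ _ (ofHom α) (ofHom β)) : α.τ₃ = β.τ₃ := by
  obtain ⟨φ, hi, hp⟩ := h
  let φ₀ : T.X₂ ⊞ U.X₁ ⟶ T.X₂ ⊞ U.X₁ := Hom.f0 φ.hom
  let φ₁ : T.X₁ ⊞ U.X₂ ⟶ T.X₁ ⊞ U.X₂ := Hom.f1 φ.hom
  have comm : biprod.desc (α.τ₂ ≫ biprod.inr) (-(U.f ≫ biprod.inr)) ≫ φ₁ =
      φ₀ ≫ biprod.desc (β.τ₂ ≫ biprod.inr) (-(U.f ≫ biprod.inr)) := Hom.comm0 φ.hom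
  have hi₁ : biprod.inr ≫ φ₁ = biprod.inr := congrArg Hom.f1 hi
  have hp₀ : φ₀ ≫ biprod.fst = biprod.fst := congrArg Hom.f0 hp
  have hβ : biprod.desc (β.τ₂ ≫ biprod.inr) (-(U.f ≫ biprod.inr)) ≫
      (biprod.snd : T.X₁ ⊞ U.X₂ ⟶ U.X₂) ≫ U.g = biprod.fst ≫ β.τ₂ ≫ U.g := by
    apply biprod.hom_ext' <;> simp
  rw [← cancel_epi T.g, ← α.comm₂₃, ← β.comm₂₃]
  simpa [reassoc_of% hi₁, reassoc_of% hp₀, hβ] using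
    biprod.inl ≫= comm =≫ (biprod.snd ≫ U.g)

lemma extEquiv_ofHom_of_sections {s : ExtSES (Cf R T.f) (Z2Cx.dagger R (Cf R U.f))}
    {s₀ : T.X₂ ⟶ s.E.X0} {s₁ : T.X₁ ⟶ s.E.X1} (hs₀ : s₀ ≫ Hom.f0 s.p = 𝟙 T.X₂)
    (hs₁ : s₁ ≫ Hom.f1 s.p = 𝟙 T.X₁) {α : T ⟶ U} (h₂ : α.τ₂ ≫ Hom.f1 s.i = s₀ ≫ s.E.d0)
    (h₁ : α.τ₁ ≫ Hom.f0 s.i = s₁ ≫ s.E.d1 - T.f ≫ s₀) : ExtEquiv _ _ (ofHom α) s := by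
  let i₀ : U.X₁ ⟶ s.E.X0 := Hom.f0 s.i
  let i₁ : U.X₂ ⟶ s.E.X1 := Hom.f1 s.i
  let p₀ : s.E.X0 ⟶ T.X₂ := Hom.f0 s.p
  let p₁ : s.E.X1 ⟶ T.X₁ := Hom.f1 s.p
  have ci₀ : (-U.f) ≫ i₁ = i₀ ≫ s.E.d0 := Hom.comm0 s.i
  have ci₁ : (-0) ≫ i₀ = i₁ ≫ s.E.d1 := Hom.comm1 s.i
  have hs₀ : s₀ ≫ p₀ = 𝟙 T.X₂ := hs₀
  have hs₁ : s₁ ≫ p₁ = 𝟙 T.X₁ := hs₁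
  have h₂ : α.τ₂ ≫ i₁ = s₀ ≫ s.E.d0 := h₂
  have h₁ : α.τ₁ ≫ i₀ = s₁ ≫ s.E.d1 - T.f ≫ s₀ := h₁
  let φ : cone α ⟶ s.E :=
    { f0 := biprod.desc s₀ i₀
      f1 := biprod.desc s₁ i₁
      comm0 := by apply biprod.hom_ext' <;> simp [cone, h₂, ← ci₀]
      comm1 := by apply biprod.hom_ext' <;> simp [cone, h₁, ← ci₁] }
  have w₀ : i₀ ≫ p₀ = 0 := s.w0
  have w₁ : i₁ ≫ p₁ = 0 := s.w1
  have hp₀ : biprod.desc s₀ i₀ ≫ p₀ = biprod.fst := by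
    apply biprod.hom_ext' <;> simp [hs₀, w₀]
  have hp₁ : biprod.desc s₁ i₁ ≫ p₁ = biprod.fst := by
    apply biprod.hom_ext' <;> simp [hs₁, w₁]
  exact extEquiv_of_hom φ (Hom.ext (biprod.inr_desc _ _) (biprod.inr_desc _ _))
    (Hom.ext hp₀ hp₁)

lemma exists_extEquiv_ofHom (hT : T.ShortExact) [Projective T.X₁] [Projective T.X₂]
    (s : ExtSES (Cf R T.f) (Z2Cx.dagger R (Cf R U.f))) :
    ∃ α : T ⟶ U, ExtEquiv _ _ (ofHom α) s := by
  have := hT.epi_g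
  have := s.ex0.mono_f
  have := s.ex1.mono_f
  let i₀ : U.X₁ ⟶ s.E.X0 := Hom.f0 s.i
  let i₁ : U.X₂ ⟶ s.E.X1 := Hom.f1 s.i
  let p₀ : s.E.X0 ⟶ T.X₂ := Hom.f0 s.p
  let p₁ : s.E.X1 ⟶ T.X₁ := Hom.f1 s.p
  have : Mono i₁ := s.ex1.mono_f
  have : Epi p₀ := s.ex0.epi_g
  have : Epi p₁ := s.ex1.epi_g
  have ci₀ : (-U.f) ≫ i₁ = i₀ ≫ s.E.d0 := Hom.comm0 s.i
  have cp₀ : s.E.d0 ≫ p₁ = p₀ ≫ 0 := Hom.comm0 s.p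
  have cp₁ : s.E.d1 ≫ p₀ = p₁ ≫ T.f := Hom.comm1 s.p
  obtain ⟨s₀, hs₀⟩ : ∃ s₀, s₀ ≫ p₀ = 𝟙 T.X₂ := ⟨_, Projective.factorThru_comp _ _⟩
  obtain ⟨s₁, hs₁⟩ : ∃ s₁, s₁ ≫ p₁ = 𝟙 T.X₁ := ⟨_, Projective.factorThru_comp _ _⟩
  obtain ⟨a₂, h₂⟩ : ∃ a₂ : T.X₂ ⟶ U.X₂, a₂ ≫ i₁ = s₀ ≫ s.E.d0 :=
    ⟨s.ex1.exact.lift (s₀ ≫ s.E.d0) (by change (s₀ ≫ s.E.d0) ≫ p₁ = 0; simp [cp₀]),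
      s.ex1.exact.lift_f _ _⟩
  have hp₀ : (s₁ ≫ s.E.d1 - T.f ≫ s₀) ≫ p₀ = 0 := by simp [cp₁, hs₀, reassoc_of% hs₁]
  obtain ⟨a₁, h₁⟩ : ∃ a₁ : T.X₁ ⟶ U.X₁, a₁ ≫ i₀ = s₁ ≫ s.E.d1 - T.f ≫ s₀ :=
    ⟨s.ex0.exact.lift _ hp₀, s.ex0.exact.lift_f _ _⟩
  have comm : a₁ ≫ U.f = T.f ≫ a₂ := by
    rw [← cancel_mono i₁, ← neg_inj, Category.assoc, ← Preadditive.comp_neg, ← Preadditive.neg_comp,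
      ci₀, reassoc_of% h₁, Category.assoc, h₂]
    simp [s.E.d10]
  have zero : T.f ≫ a₂ ≫ U.g = 0 := by
    rw [← Category.assoc, ← comm, Category.assoc, U.zero, comp_zero]
  exact ⟨⟨a₁, a₂, hT.exact.desc (a₂ ≫ U.g) zero, comm, (hT.exact.g_desc _ _).symm⟩,
    extEquiv_ofHom_of_sections hs₀ hs₁ h₂ h₁⟩

/-- Classes of extensions of `C_{T.f}` by `C_{U.f}†` correspond to morphisms `T.X₃ ⟶ U.X₃`. -/
def homEquivExtCl (hT : T.ShortExact) (hU : U.ShortExact) [Projective T.X₁] [Projective T.X₂] :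
    (T.X₃ ⟶ U.X₃) ≃ ExtCl (Cf R T.f) (Z2Cx.dagger R (Cf R U.f)) :=
  Equiv.ofBijective (fun φ => Quot.mk _ (ofHom (exists_hom_τ₃_eq (T := T) hU φ).choose)) <| by
    have := hT.epi_g
    refine ⟨fun φ ψ h => ?_, ?_⟩
    · have h' := τ₃_eq_of_extEquiv_ofHom (extCl_mk_eq_iff.1 h)
      rwa [(exists_hom_τ₃_eq hU φ).choose_spec, (exists_hom_τ₃_eq hU ψ).choose_spec] at h'
    · rintro ⟨s⟩
      obtain ⟨α, hα⟩ := exists_extEquiv_ofHom hT s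
      refine ⟨α.τ₃, extCl_mk_eq_iff.2 (extEquiv_equivalence.trans ?_ hα)⟩
      exact extEquiv_ofHom_of_τ₃_eq hU (exists_hom_τ₃_eq hU α.τ₃).choose_spec

lemma extMid_homEquivExtCl (hT : T.ShortExact) (hU : U.ShortExact) [Projective T.X₁]
    [Projective T.X₂] (α : T ⟶ U) : extMid R (homEquivExtCl hT hU α.τ₃) = ccls R (cone α) := by
  have h := extEquiv_ofHom_of_τ₃_eq hU (exists_hom_τ₃_eq (T := T) hU α.τ₃).choose_spec
  exact congrArg (extMid R) (extCl_mk_eq_iff.2 h)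

end ExtSES

end Cone

section Counting

variable {T U : ShortComplex R}

lemma extCount_Cf_dagger (hT : T.ShortExact) (hU : U.ShortExact) [Projective T.X₁]
    [Projective T.X₂] [Finite (T.X₃ ⟶ U.X₃)] {c₁ : CxCls R}
    (h : ∀ φ : T.X₃ ⟶ U.X₃, φ ≠ 0 → ∃ α : T ⟶ U, α.τ₃ = φ ∧ ccls R (cone α) = c₁)
    (c : CxCls R) :
    extCount R (Cf R T.f) (dagger R (Cf R U.f)) c =
      (if ccls R (dsum R (Cf R T.f) (dagger R (Cf R U.f))) = c then 1 else 0) +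
        (Nat.card (T.X₃ ⟶ U.X₃) - 1) * (if c₁ = c then 1 else 0) := by
  have hmid : ∀ φ ≠ 0, extMid R (ExtSES.homEquivExtCl hT hU φ) = c₁ := by
    intro φ hφ
    obtain ⟨α, rfl, hα⟩ := h φ hφ
    rw [ExtSES.extMid_homEquivExtCl, hα]
  have hzero : extMid R (ExtSES.homEquivExtCl hT hU 0) =
      ccls R (dsum R (Cf R T.f) (dagger R (Cf R U.f))) :=
    (ExtSES.extMid_homEquivExtCl hT hU 0).trans ccls_cone_zero
  rw [← hzero, ← card_fiber_of_forall_ne hmid]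
  exact (Nat.card_congr ((ExtSES.homEquivExtCl hT hU).subtypeEquiv fun _ => Iff.rfl)).symm

lemma extCount_Cf_dagger_self {K : Type*} [Field K] [Linear K R] (hT : T.ShortExact)
    [Projective T.X₁] [Projective T.X₂] [Finite (T.X₃ ⟶ T.X₃)]
    (hEnd : ∀ φ : T.X₃ ⟶ T.X₃, ∃ c : K, φ = c • 𝟙 T.X₃) (c : CxCls R) :
    extCount R (Cf R T.f) (dagger R (Cf R T.f)) c =
      (if ccls R (dsum R (Cf R T.f) (dagger R (Cf R T.f))) = c then 1 else 0) +
        (Nat.card (T.X₃ ⟶ T.X₃) - 1) *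
          (if ccls R (dsum R (KP R T.X₁) (dagger R (KP R T.X₂))) = c then 1 else 0) := by
  refine extCount_Cf_dagger hT hT (fun φ hφ => ?_) c
  obtain ⟨a, rfl⟩ := hEnd φ
  have ha : a ≠ 0 := fun h => hφ (by rw [h, zero_smul])
  have isIso_smul (X : R) : IsIso (a • 𝟙 X) :=
    ⟨a⁻¹ • 𝟙 X, by simp [smul_smul, ha], by simp [smul_smul, ha]⟩
  let α : T ⟶ T := ⟨a • 𝟙 _, a • 𝟙 _, a • 𝟙 _, by simp, by simp⟩
  have : IsIso α.τ₁ := isIso_smul _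
  have : IsIso α.τ₂ := isIso_smul _
  exact ⟨α, rfl, ccls_cone_of_isIso α⟩

open ZeroObject in
lemma extCount_KP_dagger (P Q : R) [Projective P] (c : CxCls R) :
    extCount R (KP R P) (dagger R (KP R Q)) c =
      if ccls R (dsum R (KP R P) (dagger R (KP R Q))) = c then 1 else 0 := by
  let T : ShortComplex R := ShortComplex.mk (𝟙 P) (0 : P ⟶ 0) comp_zero
  let U : ShortComplex R := ShortComplex.mk (𝟙 Q) (0 : Q ⟶ 0) comp_zero
  have : Projective T.X₁ := ‹Projective P›
  have : Projective T.X₂ := ‹Projective P›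
  have : Subsingleton (T.X₃ ⟶ U.X₃) := ⟨fun _ _ => (isZero_zero R).eq_of_tgt _ _⟩
  have h := extCount_Cf_dagger (shortExact_id_zero (isZero_zero R) : T.ShortExact)
    (shortExact_id_zero (isZero_zero R) : U.ShortExact) (c₁ := c)
    (fun φ hφ => (hφ (Subsingleton.elim _ _)).elim) c
  rwa [Nat.card_unique, Nat.sub_self, zero_mul, add_zero] at h

end Counting

end Z2Cx

/-! ### Canonical decompositions -/

namespace DecData

variable (dd : DecData R)

lemma cplus_eq_and_cminus_eq_of_mono {M : Z2Cx R} [Projective M.X0] [Projective M.X1]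
    [Mono M.d1] : dd.cplus M = K0.cls R M.X1 ∧ dd.cminus M = 0 := by
  obtain ⟨P, Q, P', Q', f, g, -, -, -, -, -, _, ⟨e⟩, hplus, hminus⟩ :=
    dd.spec M inferInstance inferInstance
  let e₀ : M.X0 ≅ Q ⊞ P' := Z2Cx.eval₀.mapIso e
  let e₁ : M.X1 ≅ P ⊞ Q' := Z2Cx.eval₁.mapIso e
  have comm₀ : M.d0 ≫ e₁.hom = e₀.hom ≫ biprod.map 0 (-g) := Z2Cx.Hom.comm0 e.hom
  have comm₁ : biprod.map f (-0) ≫ e₀.inv = e₁.inv ≫ M.d1 := Z2Cx.Hom.comm1 e.inv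
  have hd₀ : M.d0 = 0 := by rw [← cancel_mono M.d1, M.d01, zero_comp]
  have hg : g = 0 := by
    have hmap : biprod.map (0 : Q ⟶ P) (-g) = 0 := by
      rw [← cancel_epi e₀.hom, ← comm₀, hd₀, zero_comp, comp_zero]
    simpa using biprod.inr ≫= hmap =≫ biprod.snd
  have hQ' : IsZero Q' := by
    refine isZero_of_mono_eq_zero (g := (biprod.inr : Q' ⟶ P ⊞ Q') ≫ e₁.inv ≫ M.d1) ?_
    rw [← comm₁, biprod.inr_map_assoc, neg_zero, zero_comp]
  constructor
  · rw [hplus, K0.cls_eq_of_iso e₁, K0.cls_biprod, K0.cls_of_isZero hQ', add_zero]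
  · rw [hminus, K0.cls_of_isZero (isZero_of_mono_eq_zero hg)]

/-- The decomposition data obtained by transport along `†`, which interchanges the two summands
of the canonical decomposition. -/
def dagger : DecData R where
  cplus M := dd.cminus (Z2Cx.dagger R M)
  cminus M := dd.cplus (Z2Cx.dagger R M)
  spec M h₀ h₁ := by
    obtain ⟨P, Q, P', Q', f, g, hP, hQ, hP', hQ', hf, hg, ⟨e⟩, hplus, hminus⟩ :=
      dd.spec (Z2Cx.dagger R M) h₁ h₀
    refine ⟨P', Q', P, Q, g, f, hP', hQ', hP, hQ, hg, hf, ?_, hminus, hplus⟩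
    rw [← Z2Cx.ccls_eq_ccls_iff, ← Z2Cx.daggerCls_ccls_dsum_dagger, Z2Cx.eq_daggerCls_iff]
    exact Z2Cx.ccls_eq_ccls_iff.2 ⟨e⟩

variable {P Q : R} [Projective P] [Projective Q] (f : P ⟶ Q) [Mono f]

lemma cplus_eq_and_cminus_eq_Cf :
    dd.cplus (Z2Cx.Cf R f) = K0.cls R P ∧ dd.cminus (Z2Cx.Cf R f) = 0 :=
  have : Projective (Z2Cx.Cf R f).X0 := ‹Projective Q›
  have : Projective (Z2Cx.Cf R f).X1 := ‹Projective P›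
  have : Mono (Z2Cx.Cf R f).d1 := ‹Mono f›
  dd.cplus_eq_and_cminus_eq_of_mono

lemma cplus_Cf : dd.cplus (Z2Cx.Cf R f) = K0.cls R P := (dd.cplus_eq_and_cminus_eq_Cf f).1

lemma cminus_Cf : dd.cminus (Z2Cx.Cf R f) = 0 := (dd.cplus_eq_and_cminus_eq_Cf f).2

lemma cplus_dagger_Cf : dd.cplus (Z2Cx.dagger R (Z2Cx.Cf R f)) = 0 := dd.dagger.cminus_Cf f

lemma cminus_dagger_Cf : dd.cminus (Z2Cx.dagger R (Z2Cx.Cf R f)) = K0.cls R P :=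
  dd.dagger.cplus_Cf f

end DecData

lemma fc2c_injective : Function.Injective (fc2c R) := by
  rintro ⟨M⟩ ⟨N⟩ h
  exact Quot.sound (Z2Cx.ccls_eq_ccls_iff.1 h)

/-- The basis element `[M•]` of the Hall algebra `H(C_fin(P))`. -/
def hallBasis {M : Z2Cx R} (h : FinCx R M) : FCls R →₀ ℂ := Finsupp.single (fcls R ⟨M, h⟩) 1

lemma hallBasis_apply {M : Z2Cx R} (h : FinCx R M) (c : FCls R) :
    hallBasis h c = if ccls R M = fc2c R c then 1 else 0 :=
  Finsupp.single_apply.trans (if_congr fc2c_injective.eq_iff.symm rfl rfl)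

lemma clsOf_dagger (M : Z2Cx R) : clsOf R (Z2Cx.dagger R M) = -clsOf R M :=
  (neg_sub _ _).symm

lemma Z2Cx.card_Hcx_hom_eq_one {M N : Z2Cx R} (h₀ : IsZero (H0 R N)) (h₁ : IsZero (H1 R M)) :
    Nat.card (Hcx R M ⟶ Hcx R N) = 1 :=
  Nat.card_eq_one_iff_unique.2
    ⟨⟨fun _ _ => Hom.ext (h₀.eq_of_tgt _ _) (h₁.eq_of_src _ _)⟩,
      ⟨⟨0, 0, comp_zero.trans zero_comp.symm, comp_zero.trans zero_comp.symm⟩⟩⟩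

end AbelianCategory

/-! ### Structure constants of the Hall algebra -/

/-- The scalar `v ^ t` by which powers of `v` act on the Hall algebra. -/
def vpow (v : ℝ) (t : ℚ) : ℂ := ((v ^ (t : ℝ) : ℝ) : ℂ)

lemma vpow_zero (v : ℝ) : vpow v 0 = 1 := by simp [vpow]

lemma vpow_add {v : ℝ} (hv : 0 < v) (s t : ℚ) : vpow v (s + t) = vpow v s * vpow v t := by
  simp only [vpow, Rat.cast_add, Real.rpow_add hv, Complex.ofReal_mul]

section HallCoeff

open Z2Cx

variable {v : ℝ} (ed : EulerData k R) (dd : DecData R)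

omit [Fintype k] in
lemma mu_dagger (M N : Z2Cx R) : mu ed dd (dagger R M) (dagger R N) = mu ed dd.dagger M N := by
  simp only [mu, dagger, DecData.dagger]
  ring

lemma hallCoeff_dagger (M N : Z2Cx R) (c : CxCls R) :
    hallCoeff v ed dd (dagger R M) (dagger R N) c =
      hallCoeff v ed dd.dagger M N (daggerCls c) := by
  have hX : ed.eQ (K0.cls R (dagger R M).X0) (K0.cls R (dagger R N).X0) +
      ed.eQ (K0.cls R (dagger R M).X1) (K0.cls R (dagger R N).X1) =
      ed.eQ (K0.cls R M.X0) (K0.cls R N.X0) + ed.eQ (K0.cls R M.X1) (K0.cls R N.X1) :=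
    add_comm _ _
  simp only [hallCoeff, hVal, hX, mu_dagger, ExtSES.extCount_dagger, card_Hcx_dagger_hom]

lemma hallCoeff_of_card_hom_eq_one (hv : 0 < v) (hv_sq : v ^ 2 = (Fintype.card k : ℝ))
    {M N : Z2Cx R} (hcard : Nat.card (Hcx R M ⟶ Hcx R N) = 1) (c : CxCls R) :
    hallCoeff v ed dd M N c =
      vpow v (ed.eQ (K0.cls R M.X0) (K0.cls R N.X0) + ed.eQ (K0.cls R M.X1) (K0.cls R N.X1) -
        2 * mu ed dd M N) * extCount R M N c := by
  rw [hallCoeff, hVal, hcard, Nat.cast_one, mul_one, ← hv_sq, ← Real.rpow_natCast,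
    ← Real.rpow_mul hv.le, mul_div_right_comm, ← Real.rpow_sub hv, vpow]
  push_cast
  rfl

variable {P Q P' Q' : R} [Projective P] [Projective Q] [Projective P'] [Projective Q']
  (f : P ⟶ Q) (g : P' ⟶ Q') [Mono f] [Mono g]

omit [Fintype k] in
lemma mu_Cf_dagger :
    mu ed dd (Cf R f) (dagger R (Cf R g)) = ed.eQ (K0.cls R P) (K0.cls R Q') := by
  rw [mu, dd.cplus_Cf, dd.cminus_Cf, dd.cplus_dagger_Cf, dd.cminus_dagger_Cf]
  simp [Cf, dagger]

lemma hallCoeff_Cf_dagger (hv : 0 < v) (hv_sq : v ^ 2 = (Fintype.card k : ℝ)) (c : CxCls R) :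
    hallCoeff v ed dd (Cf R f) (dagger R (Cf R g)) c =
      vpow v (ed.eQ (K0.cls R Q) (K0.cls R P') - ed.eQ (K0.cls R P) (K0.cls R Q')) *
        extCount R (Cf R f) (dagger R (Cf R g)) c := by
  have hH₀ : IsZero (H0 R (dagger R (Cf R g))) :=
    (isZero_H1_Cf g).of_iso (H0DaggerIso (Cf R g))
  rw [hallCoeff_of_card_hom_eq_one ed dd hv hv_sq (card_Hcx_hom_eq_one hH₀ (isZero_H1_Cf f)),
    mu_Cf_dagger]
  congr 2
  simp only [Cf, dagger]
  ring

lemma hallCoeff_dagger_Cf (hv : 0 < v) (hv_sq : v ^ 2 = (Fintype.card k : ℝ)) (c : CxCls R) :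
    hallCoeff v ed dd (dagger R (Cf R f)) (Cf R g) c =
      vpow v (ed.eQ (K0.cls R Q) (K0.cls R P') - ed.eQ (K0.cls R P) (K0.cls R Q')) *
        extCount R (Cf R f) (dagger R (Cf R g)) (daggerCls c) := by
  rw [← hallCoeff_Cf_dagger ed dd.dagger f g hv hv_sq, ← hallCoeff_dagger, dagger_dagger]

end HallCoeff

/-! ### The localized Hall algebra -/

namespace DHSetting

open Z2Cx

variable (S : DHSetting k R)

lemma mulH_hallBasis_apply {M N : Z2Cx R} (hM : FinCx R M) (hN : FinCx R N) (c : FCls R) :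
    S.mulH (hallBasis hM) (hallBasis hN) c = hallCoeff S.v S.ed S.dd M N (fc2c R c) :=
  S.mulH_single ⟨M, hM⟩ ⟨N, hN⟩ c

section Products

variable {T : ShortComplex R} (hT : T.ShortExact) (h : FinCx R (Cf R T.f))
  [Projective T.X₁] [Projective T.X₂]
  (hEnd : ∀ φ : T.X₃ ⟶ T.X₃, ∃ a : k, φ = a • 𝟙 T.X₃)

include hT hEnd

lemma mulH_Cf_dagger :
    S.mulH (hallBasis h) (hallBasis h.dagger) =
      vpow S.v (S.ed.eQ (K0.cls R T.X₂) (K0.cls R T.X₁) -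
          S.ed.eQ (K0.cls R T.X₁) (K0.cls R T.X₂)) •
        (hallBasis (h.dsum h.dagger) + ((Nat.card (T.X₃ ⟶ T.X₃) - 1 : ℕ) : ℂ) •
          hallBasis ((finCx_KP T.X₁).dsum (finCx_KP T.X₂).dagger)) := by
  have := hT.mono_f
  have := finite_end_of_forall_eq_smul_id hEnd
  ext c
  rw [mulH_hallBasis_apply, hallCoeff_Cf_dagger S.ed S.dd T.f T.f S.v_pos S.v_sq,
    extCount_Cf_dagger_self hT hEnd]
  simp only [Finsupp.smul_apply, Finsupp.add_apply, hallBasis_apply, smul_eq_mul, Nat.cast_add,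
    Nat.cast_mul, Nat.cast_ite, Nat.cast_one, Nat.cast_zero]

lemma mulH_dagger_Cf :
    S.mulH (hallBasis h.dagger) (hallBasis h) =
      vpow S.v (S.ed.eQ (K0.cls R T.X₂) (K0.cls R T.X₁) -
          S.ed.eQ (K0.cls R T.X₁) (K0.cls R T.X₂)) •
        (hallBasis (h.dsum h.dagger) + ((Nat.card (T.X₃ ⟶ T.X₃) - 1 : ℕ) : ℂ) •
          hallBasis ((finCx_KP T.X₂).dsum (finCx_KP T.X₁).dagger)) := by
  have := hT.mono_f
  have := finite_end_of_forall_eq_smul_id hEnd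
  ext c
  rw [mulH_hallBasis_apply, hallCoeff_dagger_Cf S.ed S.dd T.f T.f S.v_pos S.v_sq,
    extCount_Cf_dagger_self hT hEnd]
  simp only [eq_daggerCls_iff, daggerCls_ccls_dsum_dagger, Finsupp.smul_apply,
    Finsupp.add_apply, hallBasis_apply, smul_eq_mul, Nat.cast_add, Nat.cast_mul, Nat.cast_ite,
    Nat.cast_one, Nat.cast_zero]

end Products

section Acyclic

variable (P Q : R) [Projective P] [Projective Q]

lemma mulH_KP_dagger :
    S.mulH (hallBasis (finCx_KP P)) (hallBasis (finCx_KP Q).dagger) =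
      hallBasis ((finCx_KP P).dsum (finCx_KP Q).dagger) := by
  ext c
  have hcoeff := hallCoeff_Cf_dagger S.ed S.dd (𝟙 P) (𝟙 Q) S.v_pos S.v_sq (fc2c R c)
  rw [sub_self, vpow_zero, _root_.one_mul] at hcoeff
  rw [mulH_hallBasis_apply, hallBasis_apply]
  exact hcoeff.trans ((congrArg Nat.cast (extCount_KP_dagger P Q (fc2c R c))).trans (by simp))

lemma loc_KP_dsum_dagger :
    S.loc (hallBasis ((finCx_KP P).dsum (finCx_KP Q).dagger)) =
      S.KK (K0.cls R P, K0.cls R Q) := by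
  have hP : S.loc (hallBasis (finCx_KP P)) = S.KK (K0.cls R P, 0) := S.KK_P P ‹_› _
  have hQ : S.loc (hallBasis (finCx_KP Q).dagger) = S.KK (0, K0.cls R Q) := S.KK_Pd Q ‹_› _
  rw [← S.mulH_KP_dagger, ← S.loc_mul, hP, hQ, S.KK_mul, Prod.mk_add_mk, add_zero, zero_add]

end Acyclic

lemma loc_commutator_Cf_dagger {T : ShortComplex R} (hT : T.ShortExact)
    (h : FinCx R (Cf R T.f)) (hEnd : ∀ φ : T.X₃ ⟶ T.X₃, ∃ a : k, φ = a • 𝟙 T.X₃) :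
    S.loc (S.mulH (hallBasis h) (hallBasis h.dagger)) -
        S.loc (S.mulH (hallBasis h.dagger) (hallBasis h)) =
      (vpow S.v (S.ed.eQ (K0.cls R T.X₂) (K0.cls R T.X₁) -
          S.ed.eQ (K0.cls R T.X₁) (K0.cls R T.X₂)) *
        ((Nat.card (T.X₃ ⟶ T.X₃) - 1 : ℕ) : ℂ)) •
        (S.KK (K0.cls R T.X₁, K0.cls R T.X₂) - S.KK (K0.cls R T.X₂, K0.cls R T.X₁)) := by
  have : Projective T.X₂ := h.1
  have : Projective T.X₁ := h.2.1
  rw [S.mulH_Cf_dagger hT h hEnd, S.mulH_dagger_Cf hT h hEnd, ← map_sub, ← smul_sub,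
    add_sub_add_left_eq_sub, ← smul_sub, smul_smul, map_smul, map_sub, S.loc_KP_dsum_dagger,
    S.loc_KP_dsum_dagger]

lemma Eelt_eq {M : Z2Cx R} (hM : FinCx R M) :
    Eelt S M hM = vpow S.v (-S.ed.eQ (clsOf R M) (S.dd.cplus M - S.dd.cminus M)) •
      S.mulD (S.loc (hallBasis hM)) (S.KK (-S.dd.cplus M, -S.dd.cminus M)) := by
  have hcomm := S.comm_rule (-S.dd.cplus M) (-S.dd.cminus M) ⟨M, hM⟩
  rw [Eelt, hcomm, smul_smul]
  refine congrArg (· • _) ((vpow_add S.v_pos _ _).symm.trans (congrArg (vpow S.v) ?_))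
  simp only [sForm, map_sub, map_neg, AddMonoidHom.sub_apply, AddMonoidHom.neg_apply]
  ring

lemma Eelt_mul_Eelt {M N : Z2Cx R} (hM : FinCx R M) (hN : FinCx R N) :
    S.mulD (Eelt S M hM) (Eelt S N hN) =
      vpow S.v (-S.ed.eQ (clsOf R M) (S.dd.cplus M - S.dd.cminus M) -
          S.ed.eQ (clsOf R N) (S.dd.cplus N - S.dd.cminus N) -
          sForm k R S.ed (S.dd.cplus M - S.dd.cminus M) (clsOf R N)) •
        S.mulD (S.loc (S.mulH (hallBasis hM) (hallBasis hN)))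
          (S.KK (-(S.dd.cplus M + S.dd.cplus N), -(S.dd.cminus M + S.dd.cminus N))) := by
  have hmul := S.mul_general (hallBasis hM) ⟨N, hN⟩ (-S.dd.cplus M) (-S.dd.cminus M)
    (-S.dd.cplus N) (-S.dd.cminus N)
  rw [← neg_add, ← neg_add] at hmul
  rw [Eelt_eq, Eelt_eq, map_smul, map_smul, LinearMap.smul_apply]
  refine (congrArg (fun x => _ • _ • x) hmul).trans ?_
  rw [smul_smul, smul_smul]
  refine congrArg (· • _) ?_
  change _ * _ * vpow S.v _ = _
  rw [← vpow_add S.v_pos, ← vpow_add S.v_pos]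
  refine congrArg (vpow S.v) ?_
  simp only [sForm, map_sub, map_neg, AddMonoidHom.sub_apply, AddMonoidHom.neg_apply]
  ring

section Commutator

variable {P Q : R} [Projective P] [Projective Q] (f : P ⟶ Q) [Mono f] (h : FinCx R (Cf R f))

lemma Eelt_Cf_mul_Eelt_dagger :
    S.mulD (Eelt S (Cf R f) h) (Eelt S (dagger R (Cf R f)) h.dagger) =
      vpow S.v (S.ed.eQ (K0.cls R P) (K0.cls R Q) - S.ed.eQ (K0.cls R Q) (K0.cls R P)) •
        S.mulD (S.loc (S.mulH (hallBasis h) (hallBasis h.dagger)))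
          (S.KK (-K0.cls R P, -K0.cls R P)) := by
  have hcls : clsOf R (Cf R f) = K0.cls R Q - K0.cls R P := rfl
  rw [Eelt_mul_Eelt, clsOf_dagger, hcls, S.dd.cplus_Cf, S.dd.cminus_Cf, S.dd.cplus_dagger_Cf,
    S.dd.cminus_dagger_Cf, add_zero, zero_add]
  congr 2
  simp only [sForm, map_sub, map_neg, map_zero, AddMonoidHom.sub_apply, AddMonoidHom.neg_apply,
    AddMonoidHom.zero_apply]
  ring

lemma Eelt_dagger_mul_Eelt_Cf :
    S.mulD (Eelt S (dagger R (Cf R f)) h.dagger) (Eelt S (Cf R f) h) =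
      vpow S.v (S.ed.eQ (K0.cls R P) (K0.cls R Q) - S.ed.eQ (K0.cls R Q) (K0.cls R P)) •
        S.mulD (S.loc (S.mulH (hallBasis h.dagger) (hallBasis h)))
          (S.KK (-K0.cls R P, -K0.cls R P)) := by
  have hcls : clsOf R (Cf R f) = K0.cls R Q - K0.cls R P := rfl
  rw [Eelt_mul_Eelt, clsOf_dagger, hcls, S.dd.cplus_Cf, S.dd.cminus_Cf, S.dd.cplus_dagger_Cf,
    S.dd.cminus_dagger_Cf, add_zero, zero_add]
  congr 2
  simp only [sForm, map_sub, map_neg, map_zero, AddMonoidHom.sub_apply, AddMonoidHom.neg_apply,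
    AddMonoidHom.zero_apply]
  ring

end Commutator

lemma commutator_Eelt_Cf_dagger {T : ShortComplex R} (hT : T.ShortExact)
    (h : FinCx R (Cf R T.f)) (hEnd : ∀ φ : T.X₃ ⟶ T.X₃, ∃ a : k, φ = a • 𝟙 T.X₃) :
    S.mulD (Eelt S (Cf R T.f) h) (Eelt S (dagger R (Cf R T.f)) h.dagger) -
        S.mulD (Eelt S (dagger R (Cf R T.f)) h.dagger) (Eelt S (Cf R T.f) h) =
      ((Nat.card (T.X₃ ⟶ T.X₃) - 1 : ℕ) : ℂ) •
        (S.KK (0, K0.cls R T.X₃) - S.KK (K0.cls R T.X₃, 0)) := by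
  have : Projective T.X₂ := h.1
  have : Projective T.X₁ := h.2.1
  have := hT.mono_f
  have hcls : K0.cls R T.X₂ + -K0.cls R T.X₁ = K0.cls R T.X₃ := by
    rw [K0.cls_eq_add_of_shortExact hT, add_neg_cancel_comm]
  rw [S.Eelt_Cf_mul_Eelt_dagger, S.Eelt_dagger_mul_Eelt_Cf, ← smul_sub, ← LinearMap.sub_apply,
    ← map_sub, S.loc_commutator_Cf_dagger hT h hEnd, map_smul, LinearMap.smul_apply, smul_smul,
    ← mul_assoc, ← vpow_add S.v_pos, sub_add_sub_cancel, sub_self, vpow_zero, _root_.one_mul,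
    map_sub, LinearMap.sub_apply, S.KK_mul, S.KK_mul, Prod.mk_add_mk, Prod.mk_add_mk, hcls,
    add_neg_cancel]

end DHSetting

theorem stmt17_general (S : DHSetting k R) {T : ShortComplex R} (hT : T.ShortExact)
    (h : FinCx R (Z2Cx.Cf R T.f)) (hEnd : ∀ φ : T.X₃ ⟶ T.X₃, ∃ a : k, φ = a • 𝟙 T.X₃) :
    S.mulD (Eelt S (Z2Cx.Cf R T.f) h) (Eelt S (Z2Cx.dagger R (Z2Cx.Cf R T.f)) h.dagger) -
        S.mulD (Eelt S (Z2Cx.dagger R (Z2Cx.Cf R T.f)) h.dagger) (Eelt S (Z2Cx.Cf R T.f) h) =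
      ((Fintype.card k : ℂ) - 1) • (S.KK (0, K0.cls R T.X₃) - S.KK (K0.cls R T.X₃, 0)) := by
  rw [S.commutator_Eelt_Cf_dagger hT h hEnd]
  by_cases hA : IsZero T.X₃
  · rw [K0.cls_of_isZero hA, sub_self, smul_zero, smul_zero]
  · rw [card_end_of_forall_eq_smul_id hA hEnd, Nat.card_eq_fintype_card,
      Nat.cast_pred Fintype.card_pos]

theorem stmt17 (hH : Hereditary k R) (hc : CondC R) (hd : CondD R) (he : CondE R)
    (S : DHSetting k R)
    -- a fixed choice of projective resolution `0 → P_C → Q_C → C → 0` for each object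
    (rP rQ : R → R) (rf : ∀ C : R, rP C ⟶ rQ C) (rπ : ∀ C : R, rQ C ⟶ C)
    (hres : ∀ C : R, IsFinHom R C → Projective (rP C) ∧ Projective (rQ C) ∧
      ∃ w : rf C ≫ rπ C = 0, (ShortComplex.mk (rf C) (rπ C) w).ShortExact)
    (hfc : ∀ C : R, IsFinHom R C → FinCx R (Z2Cx.Cf R (rf C)))
    (hfcd : ∀ C : R, IsFinHom R C → FinCx R (Z2Cx.dagger R (Z2Cx.Cf R (rf C))))
    (A : R) (hA : IsFinHom R A)
    (hEnd : ∀ f : A ⟶ A, ∃ c : k, f = c • 𝟙 A) :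
    S.mulD (Eelt S (Z2Cx.Cf R (rf A)) (hfc A hA))
        (Eelt S (Z2Cx.dagger R (Z2Cx.Cf R (rf A))) (hfcd A hA)) -
      S.mulD (Eelt S (Z2Cx.dagger R (Z2Cx.Cf R (rf A))) (hfcd A hA))
        (Eelt S (Z2Cx.Cf R (rf A)) (hfc A hA)) =
      ((Fintype.card k : ℂ) - 1) •
        (S.KK (0, K0.cls R A) - S.KK (K0.cls R A, 0)) := by
  obtain ⟨-, -, w, hT⟩ := hres A hA
  exact stmt17_general S hT (hfc A hA) hEnd

end
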